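/- Let Ω be a regular bounded domain of a Riemannian manifold (M,g). Suppose that for every t > 0, Ω maximizes the trace of the Dirichlet heat kernel among all regular bounded domains of M of the same volume, i.e., Y_{Ω'}(t) ≤ Y_Ω(t) for every Ω' with vol(Ω') = vol(Ω). Then Ω is a solution of the isoperimetric problem in (M,g): for every regular bounded domain Ω' ⊂ M with vol(Ω') = vol(Ω), one has vol(∂Ω') ≥ vol(∂Ω). -/

import Mathlib

/-!
When two domains have the same volume, the leading terms of their heat trace expansions agree, so
the order of the traces for small `t` is decided by the next coefficient `-(√π/2) vol(∂S)`.
Concretely, `Y_{Ω'}(t) ≤ Y_Ω(t)` is preserved by multiplying by `(4πt)^{n/2}`, subtracting the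
common volume and dividing by `√t`. The limit `t → 0⁺` gives
`-(√π/2) vol(∂Ω') ≤ -(√π/2) vol(∂Ω)`, which is the isoperimetric inequality.
-/

open Set Filter Topology

/-!
Abstract framework.  Mathlib does not yet provide Riemannian metrics,
Laplace–Beltrami operators, boundary measures or normal derivatives, so we
encode all the Riemannian-geometric data attached to a Riemannian manifold
`(M, g)` and to its regular bounded domains as the fields of a structure.
The topological boundary `∂Ω` of a domain `Ω ⊆ M` is `frontier Ω`, and the
deformed domain `Ω_ε = f_ε(Ω)` is the image `f ε '' Ω`.
-/
structure RiemannianGeometry (M : Type*) [TopologicalSpace M] where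
  /-- the metric `g` of the ambient Riemannian manifold `(M, g)` is real analytic -/
  RealAnalyticMetric : Prop
  /-- the Riemannian volume `vol(Ω, g)` of a domain -/
  vol : Set M → ℝ
  /-- the boundary volume `vol(∂Ω, ḡ)` w.r.t. the induced metric `ḡ` on `∂Ω` -/
  bvol : Set M → ℝ
  /-- the integral `∫_Ω u dv_g` over a domain w.r.t. the Riemannian measure of `g` -/
  intD : Set M → (M → ℝ) → ℝ
  /-- the boundary integral `∫_{∂Ω} u dv_ḡ` w.r.t. the measure of the induced metric -/
  intB : Set M → (M → ℝ) → ℝ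
  /-- the Laplace operator `Δ = Δ_g` (sign convention: `Δφ = λφ` with `λ ≥ 0`
  for the Dirichlet problem) -/
  lap : (M → ℝ) → (M → ℝ)
  /-- `nderiv Ω φ` is the outward normal derivative `∂φ/∂ν` along `∂Ω` -/
  nderiv : Set M → (M → ℝ) → (M → ℝ)
  /-- `eigen Ω k` is the `k`-th Dirichlet eigenvalue `λ_k(Ω)` (for `k ≥ 1`), the
  Dirichlet spectrum being `λ_1 < λ_2 ≤ ⋯ ≤ λ_k ↑ +∞`, counted with multiplicity -/
  eigen : Set M → ℕ → ℝ
  /-- the Dirichlet spectrum is nondecreasing in `k` -/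
  eigen_mono : ∀ (Ω : Set M) (j k : ℕ), 1 ≤ j → j ≤ k → eigen Ω j ≤ eigen Ω k
  /-- `Ω` is a regular bounded domain of `M` -/
  IsRegularDomain : Set M → Prop
  /-- `φ` is a smooth (`C^∞`) function on `Ω̄` -/
  IsSmoothOn : Set M → (M → ℝ) → Prop
  /-- `v` is a smooth function on the boundary `∂Ω` -/
  IsSmoothOnBoundary : Set M → (M → ℝ) → Prop
  /-- `ε ↦ f_ε` is an analytic 1-parameter family of maps -/
  IsAnalyticFamily : (ℝ → M → M) → Prop
  /-- `ε ↦ f_ε` is a differentiable 1-parameter family of maps -/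
  IsSmoothFamily : (ℝ → M → M) → Prop
  /-- `normalComp Ω f = g(d/dε f_ε|_{ε=0}, ν)` is the normal component along `∂Ω`
  of the variation vector field of the deformation `f` of `Ω` -/
  normalComp : Set M → (ℝ → M → M) → (M → ℝ)

namespace RiemannianGeometry

variable {M : Type*} [TopologicalSpace M] (G : RiemannianGeometry M)

/-- `f` is a deformation of `Ω`: a 1-parameter family of diffeomorphisms
`f_ε : Ω → Ω_ε = f_ε(Ω)` with `f_0 = Id` and `f_ε(∂Ω) = ∂Ω_ε`. -/
def IsDeformation (Ω : Set M) (f : ℝ → M → M) : Prop :=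
  f 0 = id ∧ (∀ ε, Set.InjOn (f ε) (closure Ω)) ∧
    (∀ ε, f ε '' frontier Ω = frontier (f ε '' Ω))

/-- an analytic deformation of `Ω` -/
def IsAnalyticDeformation (Ω : Set M) (f : ℝ → M → M) : Prop :=
  IsDeformation Ω f ∧ G.IsAnalyticFamily f

/-- a differentiable deformation of `Ω` -/
def IsSmoothDeformation (Ω : Set M) (f : ℝ → M → M) : Prop :=
  IsDeformation Ω f ∧ G.IsSmoothFamily f

/-- the deformation is volume-preserving: `vol(Ω_ε, g)` does not depend on `ε` -/
def IsVolumePreserving (Ω : Set M) (f : ℝ → M → M) : Prop :=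
  ∀ ε, G.vol (f ε '' Ω) = G.vol Ω

/-- `φ` is a Dirichlet eigenfunction on `Ω` for the eigenvalue `lam`, i.e. a
smooth solution of `Δφ = lam · φ` in `Ω`, `φ = 0` on `∂Ω`.  The set of such
functions is the eigenspace `E_lam`. -/
def IsEigenfunction (Ω : Set M) (lam : ℝ) (φ : M → ℝ) : Prop :=
  G.IsSmoothOn Ω φ ∧ (∀ x ∈ Ω, G.lap φ x = lam * φ x) ∧
    ∀ x ∈ frontier Ω, φ x = 0

/-- `φ` does not vanish identically on `Ω` -/
def NontrivialOn (Ω : Set M) (φ : M → ℝ) : Prop := ∃ x ∈ Ω, φ x ≠ 0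

/-- `lam` is a Dirichlet eigenvalue of `Ω` of multiplicity `p`: its eigenspace
admits an `L²(Ω, g)`-orthonormal basis made of `p` eigenfunctions -/
def HasMultiplicity (Ω : Set M) (lam : ℝ) (p : ℕ) : Prop :=
  ∃ ψ : Fin p → M → ℝ,
    (∀ i, G.IsEigenfunction Ω lam (ψ i)) ∧
    (∀ i j, G.intD Ω (fun x => ψ i x * ψ j x) = if i = j then 1 else 0) ∧
    ∀ φ, G.IsEigenfunction Ω lam φ →
      ∃ c : Fin p → ℝ, ∀ x ∈ closure Ω, φ x = ∑ i, c i * ψ i x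

/-- the space `𝒜₀(∂Ω)` of smooth functions on `∂Ω` with zero mean value -/
def MeanZero (Ω : Set M) (v : M → ℝ) : Prop :=
  G.IsSmoothOnBoundary Ω v ∧ G.intB Ω v = 0

/-- the quadratic form `q_v(φ) = -∫_{∂Ω} v (∂φ/∂ν)² dv_ḡ` -/
def qForm (Ω : Set M) (v : M → ℝ) (φ : M → ℝ) : ℝ :=
  - G.intB Ω fun x => v x * (G.nderiv Ω φ x) ^ 2

/-- `q_v` is definite (positive definite or negative definite) on the
eigenspace of `lam` -/
def qFormDefinite (Ω : Set M) (lam : ℝ) (v : M → ℝ) : Prop :=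
  (∀ φ, G.IsEigenfunction Ω lam φ → NontrivialOn Ω φ → 0 < G.qForm Ω v φ) ∨
  (∀ φ, G.IsEigenfunction Ω lam φ → NontrivialOn Ω φ → G.qForm Ω v φ < 0)

/-- `Ω` is a critical domain for the `k`-th eigenvalue of the Dirichlet
Laplacian: for every analytic volume-preserving deformation of `Ω`, the
(one-sided) right and left derivatives of `ε ↦ λ_k(Ω_ε)` at `ε = 0` exist and
have opposite signs, i.e. their product is `≤ 0`. -/
def IsCriticalEigen (Ω : Set M) (k : ℕ) : Prop :=
  ∀ f : ℝ → M → M, G.IsAnalyticDeformation Ω f → G.IsVolumePreserving Ω f →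
    ∃ dR dL : ℝ,
      HasDerivWithinAt (fun ε => G.eigen (f ε '' Ω) k) dR (Set.Ici 0) 0 ∧
      HasDerivWithinAt (fun ε => G.eigen (f ε '' Ω) k) dL (Set.Iic 0) 0 ∧
      dR * dL ≤ 0

/-- `Ω` is a local minimizer for the `k`-th Dirichlet eigenvalue under
volume-preserving deformations -/
def IsLocalMinimizerEigen (Ω : Set M) (k : ℕ) : Prop :=
  ∀ f : ℝ → M → M, G.IsAnalyticDeformation Ω f → G.IsVolumePreserving Ω f →
    IsLocalMin (fun ε => G.eigen (f ε '' Ω) k) 0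

/-- `Ω` is a local maximizer for the `k`-th Dirichlet eigenvalue under
volume-preserving deformations -/
def IsLocalMaximizerEigen (Ω : Set M) (k : ℕ) : Prop :=
  ∀ f : ℝ → M → M, G.IsAnalyticDeformation Ω f → G.IsVolumePreserving Ω f →
    IsLocalMax (fun ε => G.eigen (f ε '' Ω) k) 0

/-- the trace of the Dirichlet heat kernel: `Y_Ω(t) = ∑_{k ≥ 1} e^{-λ_k(Ω) t}` -/
noncomputable def heatTrace (Ω : Set M) (t : ℝ) : ℝ :=
  ∑' k : ℕ, Real.exp (-(G.eigen Ω (k + 1)) * t)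

/-- `Ω` is critical for the trace of the Dirichlet heat kernel at time `t`
under volume-preserving domain deformations: for every volume-preserving
deformation of `Ω`, `(d/dε) Y_{Ω_ε}(t)|_{ε=0} = 0`. -/
def IsCriticalHeatTrace (Ω : Set M) (t : ℝ) : Prop :=
  ∀ f : ℝ → M → M, G.IsSmoothDeformation Ω f → G.IsVolumePreserving Ω f →
    ∀ D : ℝ, HasDerivAt (fun ε => G.heatTrace (f ε '' Ω) t) D 0 → D = 0

end RiemannianGeometry

open Real in
/-- **Proposition 4.4 (maximizers of the heat trace are isoperimetric).**
Let `Ω` be a regular bounded domain of an `n`-dimensional Riemannian manifold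
`(M, g)`.  Recall the Minakshisundaram–Pleijel asymptotic expansion
`Y_S(t) = (4πt)^{-n/2}(a₀ + a₁ t^{1/2} + o(t^{1/2}))` as `t → 0⁺`, with
`a₀ = vol(S, g)` and `a₁ = -(√π/2) vol(∂S, ḡ)` (hypotheses `hexp₀`,
`hexp₁`).  If for every `t > 0` the domain `Ω` maximizes the trace of the
Dirichlet heat kernel among all regular bounded domains of `M` of the same
volume, then `Ω` is a solution of the isoperimetric problem in `(M, g)`:
every regular bounded domain `Ω' ⊆ M` with `vol(Ω') = vol(Ω)` satisfies
`vol(∂Ω') ≥ vol(∂Ω)`. -/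
theorem heat_trace_maximizer_is_isoperimetric
    {M : Type*} [TopologicalSpace M] (G : RiemannianGeometry M)
    (n : ℕ) -- the dimension of `M`
    -- first term of the Minakshisundaram–Pleijel expansion: `a₀ = vol(S,g)`
    (hexp₀ : ∀ S : Set M, G.IsRegularDomain S →
      Filter.Tendsto (fun t : ℝ => (4 * π * t) ^ ((n : ℝ) / 2) * G.heatTrace S t)
        (nhdsWithin 0 (Set.Ioi 0)) (nhds (G.vol S)))
    -- second term: `a₁ = -(√π/2) vol(∂S, ḡ)`
    (hexp₁ : ∀ S : Set M, G.IsRegularDomain S →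
      Filter.Tendsto
        (fun t : ℝ =>
          ((4 * π * t) ^ ((n : ℝ) / 2) * G.heatTrace S t - G.vol S) / Real.sqrt t)
        (nhdsWithin 0 (Set.Ioi 0)) (nhds (-(Real.sqrt π / 2) * G.bvol S)))
    (Ω : Set M) (hΩ : G.IsRegularDomain Ω)
    -- `Ω` maximizes `Y(t)`, for every `t > 0`, among domains of its volume
    (hmax : ∀ Ω' : Set M, G.IsRegularDomain Ω' → G.vol Ω' = G.vol Ω →
      ∀ t > (0 : ℝ), G.heatTrace Ω' t ≤ G.heatTrace Ω t) :
    ∀ Ω' : Set M, G.IsRegularDomain Ω' → G.vol Ω' = G.vol Ω →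
      G.bvol Ω' ≥ G.bvol Ω := by
  intro Ω' hΩ' hvol
  have hle := le_of_tendsto_of_tendsto (hexp₁ Ω' hΩ') (hexp₁ Ω hΩ) <| by
    filter_upwards [self_mem_nhdsWithin] with t ht
    have ht' : 0 < t := ht
    have hY := hmax Ω' hΩ' hvol t ht'
    rw [hvol]
    gcongr
  have hpi : 0 < Real.sqrt π := Real.sqrt_pos.2 Real.pi_pos
  nlinarith
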